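/- Suppose U_0 and Y_0 are both wandering subspaces for the row isometry V and the orthogonal projection P onto Y_+ satisfies P(V_α x) = V_α(P x) for every word α ∈ F_d^+ and every x ∈ U_+. Then V_α(U_0) ⊥ Y_0 for every word α ≠ 0; equivalently, K(0, α) = j_0* V_α i_0 = 0 for all α ≠ 0. -/

import Mathlib

/-!
Since `j₀ y ∈ Y₊` and `P` is the orthogonal projection onto `Y₊`, the vector `V_α i₀ u` may be
replaced by `P V_α i₀ u = V_α P i₀ u` in its inner product with `j₀ y`. As `P i₀ u ∈ Y₊`, it
remains to see that `V_α(Y₊) ⊥ Y₀` for `α ≠ 0` (`inner_Vword_of_mem_Uplus`): `V_α` maps `Y_σ` to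
`Y_{ασ}` with `ασ ≠ 0`, which is orthogonal to `Y₀` because `Y₀` is wandering, and the
orthogonality passes to the closed linear span by continuity.
-/


open scoped ComplexInnerProductSpace
open ContinuousLinearMap

noncomputable section

variable {d : ℕ} {hH U Y : Type*}
  [NormedAddCommGroup hH] [InnerProductSpace ℂ hH] [CompleteSpace hH]
  [NormedAddCommGroup U] [InnerProductSpace ℂ U] [CompleteSpace U]
  [NormedAddCommGroup Y] [InnerProductSpace ℂ Y] [CompleteSpace Y]

/-- For a word `α = α₁…α_r` (a list of generators), `Vword V α = V_{α₁} ∘ ⋯ ∘ V_{α_r}`,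
with `Vword V [] = 1`. -/
def Vword (V : Fin d → hH →L[ℂ] hH) : List (Fin d) → (hH →L[ℂ] hH)
  | [] => 1
  | k :: rest => V k ∘L Vword V rest

/-- `U₊`, the closed linear span of the subspaces `U_α = V_α(i₀(U))`, `α ∈ F_d⁺`. -/
def Uplus (V : Fin d → hH →L[ℂ] hH) (i0 : U →L[ℂ] hH) : Submodule ℂ hH :=
  (Submodule.span ℂ
    (⋃ α : List (Fin d), Set.range fun u : U => Vword V α (i0 u))).topologicalClosure

/-- The kernel `K(σ, ω) = j_σ* ∘ i_ω` where `i_ω = V_ω ∘ i₀` and `j_σ = V_σ ∘ j₀`. -/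
def Kker (V : Fin d → hH →L[ℂ] hH) (i0 : U →L[ℂ] hH) (j0 : Y →L[ℂ] hH)
    (σ ω : List (Fin d)) : U →L[ℂ] Y :=
  (ContinuousLinearMap.adjoint (Vword V σ ∘L j0)) ∘L (Vword V ω ∘L i0)

theorem Vword_append (V : Fin d → hH →L[ℂ] hH) (α β : List (Fin d)) (x : hH) :
    Vword V (α ++ β) x = Vword V α (Vword V β x) := by
  induction α with
  | nil => rfl
  | cons k rest ih => exact congrArg (V k) ih

theorem mem_Uplus (V : Fin d → hH →L[ℂ] hH) (j0 : Y →L[ℂ] hH) (y : Y) :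
    j0 y ∈ Uplus V j0 :=
  Submodule.le_topologicalClosure _
    (Submodule.subset_span (Set.mem_iUnion.2 ⟨[], y, rfl⟩))

/-- If `Y₀` is wandering, then `V_α(Y₊) ⊥ Y₀` for every nonempty word `α`. -/
theorem inner_Vword_of_mem_Uplus (V : Fin d → hH →L[ℂ] hH) (j0 : Y →L[ℂ] hH)
    (hwY : ∀ α β : List (Fin d), α ≠ β →
      ∀ y y' : Y, ⟪Vword V α (j0 y), Vword V β (j0 y')⟫ = 0)
    {α : List (Fin d)} (hα : α ≠ []) (y : Y) {x : hH} (hx : x ∈ Uplus V j0) :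
    ⟪j0 y, Vword V α x⟫ = 0 := by
  -- The vectors `x` with this property form a closed subspace, the kernel of a functional.
  let f : hH →L[ℂ] ℂ := innerSL ℂ (j0 y) ∘L Vword V α
  have hle : Uplus V j0 ≤ LinearMap.ker (f : hH →ₗ[ℂ] ℂ) := by
    refine Submodule.topologicalClosure_minimal _ (Submodule.span_le.2 ?_) f.isClosed_ker
    refine Set.iUnion_subset fun σ => ?_
    rintro _ ⟨y', rfl⟩
    change ⟪j0 y, Vword V α (Vword V σ (j0 y'))⟫ = 0
    rw [← Vword_append]
    exact hwY [] (α ++ σ) (by simp [hα]) y y'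
  exact hle hx

/-- (6') ⟹ (1)/(2) in Theorem 1.2. If `U₀` and `Y₀` are both wandering
for `V` and the orthogonal projection `P` onto `Y₊` satisfies `P V_α x = V_α P x` for all
words `α` and all `x ∈ U₊`, then `V_α(U₀) ⊥ Y₀` for all `α ≠ 0`; equivalently,
`K(0, α) = j₀* V_α i₀ = 0` for all `α ≠ 0`. -/
theorem commuting_proj_implies_multiAnalytic
    (V : Fin d → hH →L[ℂ] hH)
    (hVi : ∀ (k : Fin d) (x : hH), ‖V k x‖ = ‖x‖)
    (hVo : ∀ k l : Fin d, k ≠ l → ∀ x y : hH, ⟪V k x, V l y⟫ = 0)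
    (i0 : U →L[ℂ] hH) (hi0 : ∀ u : U, ‖i0 u‖ = ‖u‖)
    (j0 : Y →L[ℂ] hH) (hj0 : ∀ y : Y, ‖j0 y‖ = ‖y‖)
    (hwU : ∀ α β : List (Fin d), α ≠ β →
      ∀ u u' : U, ⟪Vword V α (i0 u), Vword V β (i0 u')⟫ = 0)
    (hwY : ∀ α β : List (Fin d), α ≠ β →
      ∀ y y' : Y, ⟪Vword V α (j0 y), Vword V β (j0 y')⟫ = 0)
    (P : hH →L[ℂ] hH)
    (hP : ∀ x : hH, P x ∈ Uplus V j0 ∧ x - P x ∈ (Uplus V j0)ᗮ)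
    (hcomm : ∀ (α : List (Fin d)), ∀ x ∈ Uplus V i0,
      P (Vword V α x) = Vword V α (P x)) :
    (∀ α : List (Fin d), α ≠ [] → ∀ (u : U) (y : Y),
      ⟪Vword V α (i0 u), j0 y⟫ = 0) ∧
    (∀ α : List (Fin d), α ≠ [] → Kker V i0 j0 [] α = 0) := by
  have key : ∀ α : List (Fin d), α ≠ [] → ∀ (u : U) (y : Y),
      ⟪j0 y, Vword V α (i0 u)⟫ = 0 := by
    intro α hα u y
    have hperp : ⟪j0 y, Vword V α (i0 u) - P (Vword V α (i0 u))⟫ = 0 :=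
      (Submodule.mem_orthogonal _ _).1 (hP (Vword V α (i0 u))).2 _ (mem_Uplus V j0 y)
    rw [inner_sub_right, sub_eq_zero] at hperp
    rw [hperp, hcomm α (i0 u) (mem_Uplus V i0 u)]
    exact inner_Vword_of_mem_Uplus V j0 hwY hα y (hP (i0 u)).1
  refine ⟨fun α hα u y => inner_eq_zero_symm.1 (key α hα u y), fun α hα => ?_⟩
  ext u
  refine ext_inner_left ℂ fun y => ?_
  change ⟪y, ContinuousLinearMap.adjoint (Vword V [] ∘L j0) (Vword V α (i0 u))⟫ = ⟪y, (0 : Y)⟫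
  rw [ContinuousLinearMap.adjoint_inner_right, inner_zero_right]
  exact key α hα u y
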